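/- (Theorem A, case n = 2.) For X ∈ P₂ one has c(X) ≠ (1/3)I, so the map f₂(X) = (1/3)I + ρ·(c(X) − (1/3)I)/‖c(X) − (1/3)I‖ is well defined and continuous on P₂. Its image is exactly the sphere S = { M : 3×3 complex Hermitian matrix | tr M = 1 and ‖M − (1/3)I‖ = ρ } (a 7-sphere), and for X, Y ∈ P₂ one has f₂(X) = f₂(Y) if and only if there exists a complex number λ with ‖λ‖ = 1 such that Y i j = λ * (X i j) * conj(λ) for all i, j (quaternion multiplication, viewing λ ∈ ℂ ⊂ ℍ). -/

import Mathlib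

/-!
Write each coordinate of `x ∈ ℍ³` as `x i = u i + v i * j` with `u, v ∈ ℂ³`. Then `X(x)` has complex
part `A = u u* + v v*` and `j`-part `D i j = v i * u j - u i * v j`.

The matrix `A` is positive semidefinite of trace one and rank at most two. Conversely every such
matrix arises (`exists_gram`, `gram_mem_range`), so the complex parts of the points of `P₂` form the
boundary of the convex body of density matrices. The point `(1/3)I` is interior to this body, so
each ray from it meets the boundary exactly once: at least once by the spectral theorem
(`exists_ray_gram`), at most once because moving a boundary matrix strictly towards `(1/3)I` makes
it positive definite, hence nonsingular (`ray_le`). Thus the image is the whole sphere, and `f2 X`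
determines `A`.

Finally `D i j * conj (D k l)` is a `2 × 2` minor of `A`, so `A` determines `D` up to a unit
complex factor (`exists_phase`), and conjugating `X` by a unit `lam` fixes `A` and multiplies `D`
by `lam ^ 2`; any such factor is realized by a square root (`exists_conj_of_cMat_eq`).
-/

open scoped Quaternion

/-- The inclusion `ℂ ⊂ ℍ` (span of `1` and `i`). -/
def Complex.toQuat (z : ℂ) : ℍ[ℝ] := ⟨z.re, z.im, 0, 0⟩

/-- The complex part of a quaternion `q = a + b i + c j + d k`, namely `a + b i ∈ ℂ`. -/
def Quaternion.cpart (q : ℍ[ℝ]) : ℂ := ⟨q.re, q.imI⟩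

/-- The model `P₂` of the quaternionic projective plane `HP²`: matrices
`X(x) i j = x i * conj (x j)` for unit vectors `x ∈ ℍ³`. -/
def P2 : Set (Matrix (Fin 3) (Fin 3) ℍ[ℝ]) :=
  { M | ∃ x : Fin 3 → ℍ[ℝ], (∑ i, ‖x i‖ ^ 2) = 1 ∧ ∀ i j, M i j = x i * star (x j) }

/-- Entrywise complex part of a quaternionic matrix. -/
def cMat (M : Matrix (Fin 3) (Fin 3) ℍ[ℝ]) : Matrix (Fin 3) (Fin 3) ℂ :=
  M.map Quaternion.cpart

/-- The Frobenius norm of a complex `3 × 3` matrix. -/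
noncomputable def frobC (M : Matrix (Fin 3) (Fin 3) ℂ) : ℝ :=
  Real.sqrt (∑ i, ∑ j, ‖M i j‖ ^ 2)

/-- The map `f₂(X) = (1/3)I + ρ (c(X) - (1/3)I)/‖c(X) - (1/3)I‖`, `ρ = √(2/3)`. -/
noncomputable def f2 (M : Matrix (Fin 3) (Fin 3) ℍ[ℝ]) : Matrix (Fin 3) (Fin 3) ℂ :=
  ((1 : ℝ)/3) • 1 +
    (Real.sqrt (2/3) / frobC (cMat M - ((1 : ℝ)/3) • 1)) • (cMat M - ((1 : ℝ)/3) • 1)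

/-- The target sphere: complex Hermitian matrices of trace `1` at Frobenius distance
`ρ = √(2/3)` from `(1/3)I` (a 7-sphere). -/
def sphereS : Set (Matrix (Fin 3) (Fin 3) ℂ) :=
  { M | M.IsHermitian ∧ M.trace = 1 ∧ frobC (M - ((1 : ℝ)/3) • 1) = Real.sqrt (2/3) }

/-! ### Complex part and `j`-part of a quaternion -/

/-- The coefficient `c + d i` in the decomposition `q = (a + b i) + (c + d i) j`. -/
def jpart (q : ℍ[ℝ]) : ℂ := ⟨q.imJ, q.imK⟩

lemma quat_ext_parts {p q : ℍ[ℝ]} (h₁ : p.cpart = q.cpart) (h₂ : jpart p = jpart q) : p = q := by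
  simp only [Quaternion.cpart, jpart, Complex.mk.injEq] at h₁ h₂
  exact QuaternionAlgebra.ext h₁.1 h₁.2 h₂.1 h₂.2

lemma cpart_mul_star (p q : ℍ[ℝ]) : (p * star q).cpart =
    p.cpart * star q.cpart + jpart p * star (jpart q) := by
  apply Complex.ext <;> simp [Quaternion.cpart, jpart] <;> ring

lemma jpart_mul_star (p q : ℍ[ℝ]) : jpart (p * star q) =
    jpart p * q.cpart - p.cpart * jpart q := by
  apply Complex.ext <;> simp [Quaternion.cpart, jpart] <;> ring

@[simp] lemma toQuat_re (z : ℂ) : z.toQuat.re = z.re := rfl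
@[simp] lemma toQuat_imI (z : ℂ) : z.toQuat.imI = z.im := rfl
@[simp] lemma toQuat_imJ (z : ℂ) : z.toQuat.imJ = 0 := rfl
@[simp] lemma toQuat_imK (z : ℂ) : z.toQuat.imK = 0 := rfl

lemma cpart_conj {lam : ℂ} (h : ‖lam‖ = 1) (q : ℍ[ℝ]) :
    (lam.toQuat * q * star lam.toQuat).cpart = q.cpart := by
  have h2 : lam.re * lam.re + lam.im * lam.im = 1 := by
    rw [← Complex.normSq_apply, Complex.normSq_eq_norm_sq, h, one_pow]
  apply Complex.ext <;> simp [Quaternion.cpart]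
  · linear_combination q.re * h2
  · linear_combination q.imI * h2

/-- Conjugation by a unit complex number rotates the `j`-part by its square, since
`j * conj lam = lam * j`. -/
lemma jpart_conj (lam : ℂ) (q : ℍ[ℝ]) :
    jpart (lam.toQuat * q * star lam.toQuat) = lam * lam * jpart q := by
  apply Complex.ext <;> simp [jpart] <;> ring

/-! ### Frobenius norm and continuity -/

lemma frobC_eq_zero {M : Matrix (Fin 3) (Fin 3) ℂ} (h : frobC M = 0) : M = 0 := by
  rw [frobC, Real.sqrt_eq_zero (by positivity),
    Finset.sum_eq_zero_iff_of_nonneg (fun _ _ => by positivity)] at h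
  ext i j
  have := h i (Finset.mem_univ i)
  rw [Finset.sum_eq_zero_iff_of_nonneg (fun _ _ => by positivity)] at this
  simpa using this j (Finset.mem_univ j)

lemma frobC_smul (r : ℝ) (M : Matrix (Fin 3) (Fin 3) ℂ) : frobC (r • M) = |r| * frobC M := by
  simp only [frobC, Matrix.smul_apply, norm_smul, mul_pow, ← Finset.mul_sum, Real.norm_eq_abs]
  rw [Real.sqrt_mul (by positivity), Real.sqrt_sq (abs_nonneg r)]

lemma continuous_frobC : Continuous frobC := by
  unfold frobC
  fun_prop

lemma continuous_cMat : Continuous cMat := by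
  refine continuous_matrix fun i j => ?_
  have h : Continuous fun X : Matrix (Fin 3) (Fin 3) ℍ[ℝ] => X i j := by fun_prop
  have h2 : (fun X : Matrix (Fin 3) (Fin 3) ℍ[ℝ] => cMat X i j) =
      fun X => ((X i j).re : ℂ) + ((X i j).imI : ℂ) * Complex.I := by
    funext X
    exact (Complex.re_add_im _).symm
  rw [h2]
  have h3 := Quaternion.continuous_re.comp h
  have h4 := Quaternion.continuous_imI.comp h
  exact (Complex.continuous_ofReal.comp h3).add
    ((Complex.continuous_ofReal.comp h4).mul continuous_const)

/-! ### Complex parts of points of `P₂` -/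

/-- The complex part of a point of `P₂` is a trace-one sum of two terms `u u* + v v*`, hence positive
semidefinite of rank at most two; the `j`-part is the wedge `v ∧ u` of the same vectors. -/
lemma exists_gram {X : Matrix (Fin 3) (Fin 3) ℍ[ℝ]} (hX : X ∈ P2) :
    ∃ u v : Fin 3 → ℂ, cMat X = Matrix.vecMulVec u (star u) + Matrix.vecMulVec v (star v) ∧
      (cMat X).trace = 1 ∧ ∀ i j, jpart (X i j) = v i * u j - u i * v j := by
  obtain ⟨x, hx, hX⟩ := hX
  refine ⟨fun i => (x i).cpart, fun i => jpart (x i), ?_, ?_, ?_⟩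
  · ext i j
    simp [cMat, hX, cpart_mul_star, Matrix.vecMulVec_apply]
  · have h : ∀ i, cMat X i i = ((‖x i‖ ^ 2 : ℝ) : ℂ) := by
      intro i
      rw [cMat, Matrix.map_apply, hX, Quaternion.self_mul_star, Quaternion.normSq_eq_norm_mul_self]
      apply Complex.ext <;> simp [Quaternion.cpart, pow_two]
    rw [Matrix.trace]
    simp only [Matrix.diag_apply, h]
    rw [← Complex.ofReal_sum, hx, Complex.ofReal_one]
  · intro i j
    rw [hX, jpart_mul_star]

lemma det_gram (u v : Fin 3 → ℂ) :
    (Matrix.vecMulVec u (star u) + Matrix.vecMulVec v (star v)).det = 0 := by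
  simp only [Matrix.det_fin_three, Matrix.add_apply, Matrix.vecMulVec_apply]
  ring

section

open scoped ComplexOrder

lemma posSemidef_cMat {X : Matrix (Fin 3) (Fin 3) ℍ[ℝ]} (hX : X ∈ P2) :
    (cMat X).PosSemidef := by
  obtain ⟨u, v, h, -, -⟩ := exists_gram hX
  rw [h]
  exact (Matrix.posSemidef_vecMulVec_self_star u).add (Matrix.posSemidef_vecMulVec_self_star v)

lemma isHermitian_cMat {X : Matrix (Fin 3) (Fin 3) ℍ[ℝ]} (hX : X ∈ P2) :
    (cMat X).IsHermitian :=
  (posSemidef_cMat hX).isHermitian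

lemma det_cMat {X : Matrix (Fin 3) (Fin 3) ℍ[ℝ]} (hX : X ∈ P2) : (cMat X).det = 0 := by
  obtain ⟨u, v, h, -, -⟩ := exists_gram hX
  rw [h, det_gram]

lemma cMat_ne {X : Matrix (Fin 3) (Fin 3) ℍ[ℝ]} (hX : X ∈ P2) : cMat X ≠ ((1 : ℝ)/3) • 1 := by
  intro h
  have h0 := det_cMat hX
  rw [h, Matrix.det_smul_of_tower] at h0
  simp at h0

lemma frobC_pos {X : Matrix (Fin 3) (Fin 3) ℍ[ℝ]} (hX : X ∈ P2) :
    0 < frobC (cMat X - ((1 : ℝ)/3) • 1) :=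
  lt_of_le_of_ne (Real.sqrt_nonneg _)
    fun h => cMat_ne hX (sub_eq_zero.1 (frobC_eq_zero h.symm))

/-- Moving a positive semidefinite matrix `B` strictly towards `(1/3)I` makes it positive definite,
so a singular matrix `A` on the ray from `(1/3)I` through `B` is at least as far out as `B`. -/
lemma ray_le {A B : Matrix (Fin 3) (Fin 3) ℂ} (hA : A.det = 0) (hB : B.PosSemidef) {t : ℝ}
    (ht : 0 < t) (h : A - ((1 : ℝ)/3) • 1 = t • (B - ((1 : ℝ)/3) • 1)) : 1 ≤ t := by
  by_contra! hlt
  have hA' : A = ((1 - t) / 3) • (1 : Matrix (Fin 3) (Fin 3) ℂ) + t • B := by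
    rw [sub_eq_iff_eq_add] at h
    rw [h]
    module
  have h1 : (((1 - t) / 3) • (1 : Matrix (Fin 3) (Fin 3) ℂ)).PosDef :=
    Matrix.PosDef.one.smul (by linarith)
  have h2 : A.PosDef := hA' ▸ h1.add_posSemidef (hB.smul ht.le)
  exact h2.det_pos.ne' hA

end

lemma cMat_eq_of_f2_eq {X Y : Matrix (Fin 3) (Fin 3) ℍ[ℝ]} (hX : X ∈ P2) (hY : Y ∈ P2)
    (h : f2 X = f2 Y) : cMat X = cMat Y := by
  have hr : (0 : ℝ) < Real.sqrt (2/3) := by positivity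
  have ha := div_pos hr (frobC_pos hX)
  have hb := div_pos hr (frobC_pos hY)
  have h := add_left_cancel h
  set a := Real.sqrt (2/3) / frobC (cMat X - ((1 : ℝ)/3) • 1)
  set b := Real.sqrt (2/3) / frobC (cMat Y - ((1 : ℝ)/3) • 1)
  have h1 : cMat X - ((1 : ℝ)/3) • 1 = (b / a) • (cMat Y - ((1 : ℝ)/3) • 1) := by
    rw [div_eq_inv_mul b a, mul_smul, ← h, smul_smul, inv_mul_cancel₀ ha.ne', one_smul]
  have h2 : cMat Y - ((1 : ℝ)/3) • 1 = (a / b) • (cMat X - ((1 : ℝ)/3) • 1) := by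
    rw [div_eq_inv_mul a b, mul_smul, h, smul_smul, inv_mul_cancel₀ hb.ne', one_smul]
  have h3 := ray_le (det_cMat hX) (posSemidef_cMat hY) (div_pos hb ha) h1
  have h4 := ray_le (det_cMat hY) (posSemidef_cMat hX) (div_pos ha hb) h2
  rw [one_le_div ha] at h3
  rw [one_le_div hb] at h4
  rw [le_antisymm h3 h4, div_self hb.ne', one_smul] at h1
  exact sub_left_injective h1

/-! ### Recovering the `j`-part up to a phase -/

/-- A complex vector is determined up to a unit scalar by the rank-one matrix it spans. -/
lemma exists_phase {ι : Type*} (D E : ι → ℂ) (h : ∀ a b, D a * star (D b) = E a * star (E b)) :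
    ∃ m : ℂ, ‖m‖ = 1 ∧ ∀ a, E a = m * D a := by
  have hn : ∀ a, ‖D a‖ = ‖E a‖ := by
    intro a
    have := congrArg norm (h a a)
    rw [norm_mul, norm_mul, norm_star, norm_star] at this
    exact (mul_self_inj (norm_nonneg _) (norm_nonneg _)).1 this
  by_cases h0 : ∀ b, D b = 0
  · refine ⟨1, norm_one, fun a => ?_⟩
    have := hn a
    rw [h0 a, norm_zero, eq_comm, norm_eq_zero] at this
    rw [this, h0 a, mul_zero]
  · push Not at h0
    obtain ⟨b, hb⟩ := h0
    have hE : E b ≠ 0 := by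
      rw [← norm_ne_zero_iff, ← hn b]
      exact norm_ne_zero_iff.2 hb
    have hE' : star (E b) ≠ 0 := star_ne_zero.2 hE
    refine ⟨star (D b) / star (E b), ?_, fun a => ?_⟩
    · rw [norm_div, norm_star, norm_star, hn b, div_self (norm_ne_zero_iff.2 hE)]
    · rw [div_mul_eq_mul_div, eq_div_iff hE', ← h a b, mul_comm]

lemma exists_conj_of_cMat_eq {X Y : Matrix (Fin 3) (Fin 3) ℍ[ℝ]} (hX : X ∈ P2) (hY : Y ∈ P2)
    (h : cMat X = cMat Y) :
    ∃ lam : ℂ, ‖lam‖ = 1 ∧ ∀ i j, Y i j = lam.toQuat * X i j * star lam.toQuat := by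
  obtain ⟨u, v, hc, -, hd⟩ := exists_gram hX
  obtain ⟨u', v', hc', -, hd'⟩ := exists_gram hY
  have hA : ∀ i j, u i * star (u j) + v i * star (v j)
      = u' i * star (u' j) + v' i * star (v' j) := by
    intro i j
    have := congrFun (congrFun (hc.symm.trans (h.trans hc')) i) j
    simpa [Matrix.vecMulVec_apply] using this
  obtain ⟨m, hm, hm'⟩ := exists_phase (fun p : Fin 3 × Fin 3 => jpart (X p.1 p.2))
    (fun p : Fin 3 × Fin 3 => jpart (Y p.1 p.2)) (by
      rintro ⟨i, j⟩ ⟨k, l⟩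
      simp only [hd, hd', star_sub, star_mul']
      -- Both sides are the `2 × 2` minor of the common complex part with rows `i, j`
      -- and columns `k, l`.
      linear_combination hA i k * (u j * star (u l) + v j * star (v l))
        + (u' i * star (u' k) + v' i * star (v' k)) * hA j l
        - hA i l * (u j * star (u k) + v j * star (v k))
        - (u' i * star (u' l) + v' i * star (v' l)) * hA j k)
  obtain ⟨lam, rfl⟩ := IsAlgClosed.exists_eq_mul_self m
  have hl : ‖lam‖ = 1 := by
    rw [norm_mul] at hm
    nlinarith [norm_nonneg lam]
  refine ⟨lam, hl, fun i j => quat_ext_parts ?_ ?_⟩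
  · rw [cpart_conj hl]
    exact (congrFun (congrFun h i) j).symm
  · rw [jpart_conj]
    exact hm' (i, j)

/-! ### The image of `f₂` -/

lemma f2_mem_sphereS {X : Matrix (Fin 3) (Fin 3) ℍ[ℝ]} (hX : X ∈ P2) : f2 X ∈ sphereS := by
  have hH : (cMat X).IsHermitian := isHermitian_cMat hX
  obtain ⟨u, v, -, ht, -⟩ := exists_gram hX
  have hI : (((1 : ℝ)/3) • (1 : Matrix (Fin 3) (Fin 3) ℂ)).IsHermitian :=
    Matrix.isHermitian_one.smul (IsSelfAdjoint.all _)
  refine ⟨hI.add ((hH.sub hI).smul (IsSelfAdjoint.all _)), ?_, ?_⟩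
  · simp [f2, Matrix.trace_add, Matrix.trace_smul, Matrix.trace_sub, ht]
  · rw [f2, add_sub_cancel_left, frobC_smul, abs_of_nonneg
      (div_nonneg (Real.sqrt_nonneg _) (frobC_pos hX).le), div_mul_cancel₀ _ (frobC_pos hX).ne']

/-- Every `u u* + v v*` of trace one is the complex part of `X(x)`, where `x i = u i + v i * j`. -/
lemma gram_mem_range (u v : Fin 3 → ℂ)
    (ht : (Matrix.vecMulVec u (star u) + Matrix.vecMulVec v (star v)).trace = 1) :
    ∃ X ∈ P2, cMat X = Matrix.vecMulVec u (star u) + Matrix.vecMulVec v (star v) := by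
  let x : Fin 3 → ℍ[ℝ] := fun i => ⟨(u i).re, (u i).im, (v i).re, (v i).im⟩
  refine ⟨fun i j => x i * star (x j), ⟨x, ?_, fun _ _ => rfl⟩, ?_⟩
  · have := congrArg Complex.re ht
    simp only [Fin.sum_univ_three, pow_two, ← Quaternion.normSq_eq_norm_mul_self,
      Quaternion.normSq_def']
    simp [Matrix.trace, Fin.sum_univ_three, Matrix.vecMulVec_apply] at this
    simp only [x]
    linear_combination this
  · ext i j
    exact cpart_mul_star (x i) (x j)

/-- A nonzero Hermitian matrix of trace zero, scaled so that its least eigenvalue becomes `-1/3` and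
shifted by `(1/3)I`, is a sum of two rank-one terms, by the spectral theorem. -/
lemma exists_ray_gram {N : Matrix (Fin 3) (Fin 3) ℂ} (hN : N.IsHermitian) (ht : N.trace = 0)
    (h0 : N ≠ 0) : ∃ s : ℝ, 0 < s ∧ ∃ u v : Fin 3 → ℂ, ((1 : ℝ)/3) • 1 + s • N =
      Matrix.vecMulVec u (star u) + Matrix.vecMulVec v (star v) := by
  obtain ⟨k, -, hk⟩ := Finset.exists_min_image Finset.univ hN.eigenvalues Finset.univ_nonempty
  have hsum : ∑ i, hN.eigenvalues i = 0 := by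
    have := hN.trace_eq_sum_eigenvalues
    rw [ht] at this
    rw [← Complex.ofReal_inj, Complex.ofReal_sum]
    exact this.symm
  have hneg : hN.eigenvalues k < 0 := by
    by_contra! hge
    have hall := (Finset.sum_eq_zero_iff_of_nonneg
      (fun i hi => hge.trans (hk i hi))).1 hsum
    exact h0 (hN.eigenvalues_eq_zero_iff.1 (funext fun i => hall i (Finset.mem_univ i)))
  set e := hN.eigenvalues with he
  set s : ℝ := 1 / (3 * -e k) with hs
  have hspos : 0 < s := by
    apply one_div_pos.2
    linarith
  have hsk : 1 / 3 + s * e k = 0 := by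
    rw [hs]
    field_simp [hneg.ne]
    norm_num
  have hnn : ∀ i, 0 ≤ 1 / 3 + s * e i := by
    intro i
    have := mul_le_mul_of_nonneg_left (hk i (Finset.mem_univ i)) hspos.le
    linarith
  let U : Matrix (Fin 3) (Fin 3) ℂ := hN.eigenvectorUnitary
  have hspec : ∀ i j, N i j = ∑ l, (e l : ℂ) * (U i l * star (U j l)) := by
    intro i j
    conv_lhs => rw [hN.spectral_theorem]
    simp [Unitary.conjStarAlgAut_apply, Matrix.mul_apply, Matrix.diagonal_apply,
      Matrix.star_apply, U, e]
    refine Finset.sum_congr rfl fun l _ => ?_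
    ring
  have hone : ∀ i j, (1 : Matrix (Fin 3) (Fin 3) ℂ) i j = ∑ l, U i l * star (U j l) := by
    intro i j
    have := Unitary.coe_mul_star_self hN.eigenvectorUnitary
    rw [← this, Matrix.mul_apply]
    rfl
  have hsq : ∀ l, ((Real.sqrt (1 / 3 + s * e l) : ℝ) : ℂ) * (Real.sqrt (1 / 3 + s * e l) : ℝ)
      = 1 / 3 + s * e l := by
    intro l
    rw [← Complex.ofReal_mul, Real.mul_self_sqrt (hnn l)]
    push_cast
    rfl
  have hskC : (1 / 3 : ℂ) + s * e k = 0 := by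
    simpa using congrArg Complex.ofReal hsk
  refine ⟨s, hspos, fun i => (Real.sqrt (1 / 3 + s * e (k + 1)) : ℝ) * U i (k + 1),
    fun i => (Real.sqrt (1 / 3 + s * e (k + 2)) : ℝ) * U i (k + 2), ?_⟩
  have hrot : ∀ g : Fin 3 → ℂ, ∑ l, g l = g k + g (k + 1) + g (k + 2) := by
    intro g
    rw [← Equiv.sum_comp (Equiv.addLeft k) g, Fin.sum_univ_three]
    simp
  ext i j
  simp only [Matrix.add_apply, Matrix.smul_apply, Matrix.vecMulVec_apply, Pi.star_apply, hspec,
    hone, hrot, star_mul', Complex.real_smul, Complex.star_def, Complex.conj_ofReal]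
  push_cast
  linear_combination U i k * (starRingEnd ℂ) (U j k) * hskC
    - U i (k + 1) * (starRingEnd ℂ) (U j (k + 1)) * hsq (k + 1)
    - U i (k + 2) * (starRingEnd ℂ) (U j (k + 2)) * hsq (k + 2)

lemma exists_f2_eq {M : Matrix (Fin 3) (Fin 3) ℂ} (hM : M ∈ sphereS) : ∃ X ∈ P2, f2 X = M := by
  obtain ⟨hH, ht, hn⟩ := hM
  have hI : (((1 : ℝ)/3) • (1 : Matrix (Fin 3) (Fin 3) ℂ)).IsHermitian :=
    Matrix.isHermitian_one.smul (IsSelfAdjoint.all _)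
  have hr : (0 : ℝ) < Real.sqrt (2/3) := by positivity
  have htr : (M - ((1 : ℝ)/3) • 1).trace = 0 := by
    simp [Matrix.trace_sub, Matrix.trace_smul, ht]
  have h0 : M - ((1 : ℝ)/3) • 1 ≠ 0 := by
    intro h
    rw [h] at hn
    simp only [frobC, Matrix.zero_apply, norm_zero] at hn
    simp only [ne_eq, OfNat.ofNat_ne_zero, not_false_eq_true, zero_pow, Finset.sum_const_zero,
      Real.sqrt_zero] at hn
    exact hr.ne hn
  obtain ⟨s, hs, u, v, huv⟩ := exists_ray_gram (hH.sub hI) htr h0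
  obtain ⟨X, hX, hc⟩ := gram_mem_range u v (by
    rw [← huv, Matrix.trace_add, Matrix.trace_smul, Matrix.trace_smul, htr]
    simp)
  refine ⟨X, hX, ?_⟩
  rw [f2, hc, ← huv, add_sub_cancel_left, frobC_smul, hn, abs_of_pos hs, smul_smul,
    div_mul_eq_mul_div, mul_comm s, div_self (mul_pos hr hs).ne', one_smul]
  exact add_sub_cancel _ _

/-- Theorem A for `n = 2`: `f₂` is well defined and continuous on `P₂`, has image the
sphere `S ≅ S⁷`, and identifies `X` with `Y` exactly when `Y = λ X λ̄` for some unit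
complex number `λ`. -/
theorem theoremA_n2 :
    (∀ X ∈ P2, cMat X ≠ ((1 : ℝ)/3) • 1) ∧
    ContinuousOn f2 P2 ∧
    f2 '' P2 = sphereS ∧
    (∀ X ∈ P2, ∀ Y ∈ P2, (f2 X = f2 Y ↔
      ∃ lam : ℂ, ‖lam‖ = 1 ∧ ∀ i j, Y i j = lam.toQuat * X i j * star lam.toQuat)) := by
  refine ⟨fun X hX => cMat_ne hX, ?_, ?_, fun X hX Y hY => ⟨fun h => ?_, ?_⟩⟩
  · have h : Continuous fun X => cMat X - ((1 : ℝ)/3) • 1 := continuous_cMat.sub continuous_const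
    exact continuousOn_const.add ((continuousOn_const.div
      (continuous_frobC.comp h).continuousOn fun X hX => (frobC_pos hX).ne').smul h.continuousOn)
  · ext M
    exact ⟨fun ⟨X, hX, h⟩ => h ▸ f2_mem_sphereS hX, fun hM => exists_f2_eq hM⟩
  · exact exists_conj_of_cMat_eq hX hY (cMat_eq_of_f2_eq hX hY h)
  · rintro ⟨lam, hl, h⟩
    have hc : cMat X = cMat Y := by
      ext i j
      simp only [cMat, Matrix.map_apply, h, cpart_conj hl]
    rw [f2, f2, hc]
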